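/- Let θ : ℝ → ℝ be smooth, let R ∈ (0,∞), and assume Hypothesis (H_R) holds. Then for every x ∈ ℝ, θ(x)³/135 − θ'(x)²/144 + θ(x)·θ''(x)/180 + (θ''(x) + 8·θ(x)²)·π²/(720·R²) + θ(x)·π⁴/(240·R⁴) + π⁶/(2160·R⁶) ≥ 0. -/

import Mathlib

noncomputable section

/-- `g_R(t) = -(R/π)·log(1 - (π/R)·t)`. -/
def gR (R t : ℝ) : ℝ := -(R / Real.pi) * Real.log (1 - (Real.pi / R) * t)

/-- `f` is a (smooth) solution of `f'' + θ·f = 0`. -/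
def IsSolution (θ f : ℝ → ℝ) : Prop :=
  ContDiff ℝ (⊤ : ℕ∞) f ∧ ∀ t, deriv (deriv f) t + θ t * f t = 0

/-- `f₁, f₂` is the fundamental pair of solutions of `f'' + θ·f = 0` at `x`:
`f₁(x) = f₂'(x) = 1`, `f₂(x) = f₁'(x) = 0`. -/
def IsFundPair (θ : ℝ → ℝ) (x : ℝ) (f₁ f₂ : ℝ → ℝ) : Prop :=
  IsSolution θ f₁ ∧ IsSolution θ f₂ ∧
  f₁ x = 1 ∧ deriv f₁ x = 0 ∧ f₂ x = 0 ∧ deriv f₂ x = 1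

/-- The `n`-th `g_R`-Schwarzian `𝒮_n^{θ,g_R}(x)`, computed from the fundamental pair
`f₁, f₂` at `x`: the `n`-th derivative at `t = 0` of `t ↦ h_x(x + g_R(t))`,
where `h_x = f₂/f₁`. -/
def SchR (R x : ℝ) (f₁ f₂ : ℝ → ℝ) (n : ℕ) : ℝ :=
  iteratedDeriv n (fun t => f₂ (x + gR R t) / f₁ (x + gR R t)) 0

/-- The determinant `𝒟_n^{θ,g_R}(x)` of the `n×n` Hankel matrix with `(i,j)` entry
`𝒮_{i+j-1}^{θ,g_R}(x)/(i+j-1)!`. -/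
def DetR (R x : ℝ) (f₁ f₂ : ℝ → ℝ) (n : ℕ) : ℝ :=
  (Matrix.of fun i j : Fin n =>
    SchR R x f₁ f₂ (i.1 + j.1 + 1) / (Nat.factorial (i.1 + j.1 + 1) : ℝ)).det

/-- Hypothesis (H_R): `f₁, f₂` are linearly independent solutions of `f'' + θ·f = 0`
(constant Wronskian `W = f₁f₂' - f₁'f₂ ≠ 0`) and `h = f₂/f₁` admits a meromorphic
extension `H` to the strip `{|Im z| < R}` (holomorphic off the real zeros of `f₁`,
with poles at those zeros) which satisfies `W·Im H(z)·Im z > 0` for `0 < Im z < R`. -/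
def HypR (θ : ℝ → ℝ) (R : ℝ) : Prop :=
  ∃ (f₁ f₂ : ℝ → ℝ) (H : ℂ → ℂ),
    IsSolution θ f₁ ∧ IsSolution θ f₂ ∧
    f₁ 0 * deriv f₂ 0 - deriv f₁ 0 * f₂ 0 ≠ 0 ∧
    (∀ t : ℝ, f₁ t ≠ 0 → H t = ((f₂ t / f₁ t : ℝ) : ℂ)) ∧
    DifferentiableOn ℂ H
      {z : ℂ | |z.im| < R ∧ ∀ t : ℝ, f₁ t = 0 → z ≠ (t : ℂ)} ∧
    (∀ t : ℝ, f₁ t = 0 →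
      Filter.Tendsto (fun z => ‖H z‖) (nhdsWithin (t : ℂ) {(t : ℂ)}ᶜ) Filter.atTop) ∧
    (∀ z : ℂ, 0 < z.im → z.im < R →
      0 < (f₁ 0 * deriv f₂ 0 - deriv f₁ 0 * f₂ 0) * (H z).im * z.im)

/-- `(i,j)` entry (1-based, clamped to ℕ) of the matrix `T(f,n)(t)`:
`f^{(j-i)}(t)/(j-i)!` if `i ≤ j`, and `0` otherwise. -/
def Tentry (f : ℝ → ℝ) (t : ℝ) (i j : ℕ) : ℝ :=
  if i ≤ j then iteratedDeriv (j - i) f t / (Nat.factorial (j - i) : ℝ) else 0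

end

noncomputable section

open MeasureTheory Filter

/-! Fix `x` and let `u₁, u₂` be the fundamental pair at `x`. The quotient `u₂ / u₁` is a real Möbius
transform of the function `h` in the hypothesis, hence extends to a holomorphic function on the
strip `0 < Im z < R` with positive imaginary part there, and is analytic at `x`. As `gR R` maps the
upper half-plane into this strip, `t ↦ (u₂ / u₁) (x + gR R t)` extends to a holomorphic self-map of
the upper half-plane which is real and analytic at `0`. Letting the nodes in Pick's theorem collapse
to `0` shows that the Hankel matrices of its Taylor coefficients are positive semidefinite. The
`3 × 3` Hankel determinant is the polynomial in the theorem. -/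

section

open Complex Metric Real Set Asymptotics Topology ComplexConjugate
open scoped Matrix

section Pick

variable {ι : Type*} [Fintype ι]

lemma sq_sub_mul_conj_ne_zero {u v : ℂ} {r : ℝ} (hu : ‖u‖ ≤ |r|) (hv : ‖v‖ < |r|) :
    (r : ℂ) ^ 2 - u * conj v ≠ 0 := by
  refine sub_ne_zero.2 fun h ↦ ?_
  have hnorm : |r| ^ 2 = ‖u‖ * ‖v‖ := by simpa using congrArg norm h
  nlinarith [norm_nonneg u, norm_nonneg v]

lemma circleAverage_div_sub_mul_conj_sub {f : ℂ → ℂ} {c z w : ℂ} {r : ℝ}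
    (hf : DiffContOnCl ℂ f (ball c |r|)) (hz : z ∈ ball c |r|) (hw : w ∈ ball c |r|) :
    circleAverage (fun ζ ↦ f ζ / ((ζ - z) * conj (ζ - w))) c r =
      f z / (r ^ 2 - (z - c) * conj (w - c)) := by
  have hr : |r| ≠ 0 := (pos_of_mem_ball hz).ne'
  have hden : ∀ ζ ∈ closure (ball c |r|), (r : ℂ) ^ 2 - (ζ - c) * conj (w - c) ≠ 0 := by
    intro ζ hζ
    rw [closure_ball c hr, mem_closedBall_iff_norm] at hζ
    exact sq_sub_mul_conj_ne_zero hζ (mem_ball_iff_norm.1 hw)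
  have hg : DiffContOnCl ℂ (fun ζ ↦ f ζ / (r ^ 2 - (ζ - c) * conj (w - c))) (ball c |r|) := by
    have hden' : Differentiable ℂ fun ζ ↦ (r : ℂ) ^ 2 - (ζ - c) * conj (w - c) := by fun_prop
    simp only [div_eq_mul_inv]
    exact hf.smul (hden'.diffContOnCl.inv hden)
  rw [← hg.circleAverage_smul_div hz]
  refine circleAverage_congr_sphere fun ζ hζ ↦ ?_
  have hζc : ζ - c ≠ 0 := by
    rw [← norm_ne_zero_iff, mem_sphere_iff_norm.1 hζ]
    exact hr
  have hsq : (ζ - c) * conj (ζ - c) = (r : ℂ) ^ 2 := by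
    rw [mul_conj, normSq_eq_norm_sq, mem_sphere_iff_norm.1 hζ, sq_abs, ofReal_pow]
  have hconj : conj (ζ - w) = (r ^ 2 - (ζ - c) * conj (w - c)) / (ζ - c) := by
    rw [eq_div_iff hζc, ← hsq]
    simp only [map_sub]
    ring
  simp only [hconj, smul_eq_mul, div_eq_mul_inv, mul_inv_rev, inv_inv]
  ring

lemma circleIntegrable_div_sub_mul_conj_sub {f : ℂ → ℂ} {c z w : ℂ} {r : ℝ}
    (hf : DiffContOnCl ℂ f (ball c |r|)) (hz : z ∈ ball c |r|) (hw : w ∈ ball c |r|) :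
    CircleIntegrable (fun ζ ↦ f ζ / ((ζ - z) * conj (ζ - w))) c r := by
  have hcont : ContinuousOn f (sphere c |r|) := hf.continuousOn.mono <|
    (closure_ball c (pos_of_mem_ball hz).ne').symm ▸ sphere_subset_closedBall
  have hne {ζ v : ℂ} (hζ : ζ ∈ sphere c |r|) (hv : v ∈ ball c |r|) : ζ - v ≠ 0 :=
    sub_ne_zero.2 (sphere_disjoint_ball.ne_of_mem hζ hv)
  exact (hcont.div (by fun_prop) fun ζ hζ ↦
    mul_ne_zero (hne hζ hz) ((map_ne_zero _).2 (hne hζ hw))).circleIntegrable'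

lemma re_sum_div_sq_sub_nonneg {f : ℂ → ℂ} {c : ℂ} {r : ℝ}
    (hf : DiffContOnCl ℂ f (ball c |r|)) (hre : ∀ ζ ∈ sphere c |r|, 0 ≤ (f ζ).re) {z : ι → ℂ}
    (hz : ∀ i, z i ∈ ball c |r|) (x : ι → ℂ) :
    0 ≤ (∑ i, ∑ j, x i * conj (x j) *
      (f (z i) / (r ^ 2 - (z i - c) * conj (z j - c)))).re := by
  have hint (i j : ι) : CircleIntegrable
      (fun ζ ↦ x i * conj (x j) * (f ζ / ((ζ - z i) * conj (ζ - z j)))) c r :=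
    (circleIntegrable_div_sub_mul_conj_sub hf (hz i) (hz j)).const_mul _
  have hsum : circleAverage (fun ζ ↦ ∑ i, ∑ j,
      x i * conj (x j) * (f ζ / ((ζ - z i) * conj (ζ - z j)))) c r =
      ∑ i, ∑ j, x i * conj (x j) * (f (z i) / (r ^ 2 - (z i - c) * conj (z j - c))) := by
    rw [circleAverage_fun_sum fun i _ ↦ CircleIntegrable.fun_sum _ fun j _ ↦ hint i j]
    refine Finset.sum_congr rfl fun i _ ↦ ?_
    rw [circleAverage_fun_sum fun j _ ↦ hint i j]
    refine Finset.sum_congr rfl fun j _ ↦ ?_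
    simp only [← smul_eq_mul (x i * conj (x j))]
    rw [circleAverage_fun_smul, circleAverage_div_sub_mul_conj_sub hf (hz i) (hz j)]
  have hfactor (ζ : ℂ) : ∑ i, ∑ j, x i * conj (x j) * (f ζ / ((ζ - z i) * conj (ζ - z j))) =
      f ζ * (‖∑ i, x i / (ζ - z i)‖ ^ 2 : ℝ) := by
    rw [← normSq_eq_norm_sq, ← mul_conj, map_sum, Finset.sum_mul_sum, Finset.mul_sum]
    refine Finset.sum_congr rfl fun i _ ↦ ?_
    rw [Finset.mul_sum]
    refine Finset.sum_congr rfl fun j _ ↦ ?_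
    rw [map_div₀, div_mul_div_comm]
    ring
  rw [← hsum, ← reCLM_apply, ← reCLM.circleAverage_comp_comm
    (CircleIntegrable.fun_sum _ fun i _ ↦ CircleIntegrable.fun_sum _ fun j _ ↦ hint i j)]
  refine circleAverage_nonneg_of_nonneg fun ζ hζ ↦ ?_
  rw [Function.comp_apply, reCLM_apply, hfactor, re_mul_ofReal]
  exact mul_nonneg (hre ζ hζ) (sq_nonneg _)

/-- The quadratic form `∑ᵢⱼ xᵢ x̄ⱼ (F zᵢ - F̄ zⱼ) / (zᵢ - z̄ⱼ)` of the Pick matrix of `F` at the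
nodes `z`; Pick's theorem says that it is nonnegative when `F` maps the upper half-plane to its
closure. -/
def pickForm (F : ℂ → ℂ) (z x : ι → ℂ) : ℂ :=
  ∑ i, ∑ j, x i * conj (x j) * ((F (z i) - conj (F (z j))) / (z i - conj (z j)))

lemma re_pickForm (F : ℂ → ℂ) (z x : ι → ℂ) :
    (pickForm F z x).re =
      2 * (∑ i, ∑ j, x i * conj (x j) * (F (z i) / (z i - conj (z j)))).re := by
  have hconj : ∑ i, ∑ j, x i * conj (x j) * (conj (F (z j)) / (z i - conj (z j))) =
      -conj (∑ i, ∑ j, x i * conj (x j) * (F (z i) / (z i - conj (z j)))) := by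
    simp only [map_sum, ← Finset.sum_neg_distrib]
    rw [Finset.sum_comm]
    refine Finset.sum_congr rfl fun i _ ↦ Finset.sum_congr rfl fun j _ ↦ ?_
    simp only [map_mul, map_div₀, map_sub, conj_conj]
    rw [← neg_sub, div_neg]
    ring
  simp only [pickForm, sub_div, mul_sub, Finset.sum_sub_distrib, hconj, sub_neg_eq_add, add_re,
    conj_re, two_mul]

lemma closedBall_mul_I_subset {s : ℝ} (hs : 0 < s) :
    closedBall (s * I) √(s ^ 2 - 1) ⊆ {z | 0 < z.im} := by
  intro z hz
  have him : |z.im - s| ≤ √(s ^ 2 - 1) := by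
    simpa using (abs_im_le_norm _).trans (mem_closedBall_iff_norm.1 hz)
  have hsqrt : √(s ^ 2 - 1) < s := (Real.sqrt_lt' hs).2 (by linarith)
  exact sub_pos.1 (by linarith [neg_abs_le (z.im - s)] : 0 < z.im - 0)

lemma mem_ball_mul_I {z : ℂ} {s : ℝ} (hs : ‖z‖ ^ 2 + 1 < 2 * z.im * s) :
    z ∈ ball (s * I) √(s ^ 2 - 1) := by
  rw [mem_ball_iff_norm]
  refine Real.lt_sqrt_of_sq_lt ?_
  rw [← normSq_eq_norm_sq, normSq_apply] at hs ⊢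
  simp only [sub_re, sub_im, re_ofReal_mul, im_ofReal_mul, I_re, I_im]
  nlinarith

lemma re_sum_div_sub_conj_sub_nonneg {F : ℂ → ℂ} (hF : DifferentiableOn ℂ F {z | 0 < z.im})
    (hpos : ∀ z : ℂ, 0 < z.im → 0 ≤ (F z).im) {z : ι → ℂ} {s : ℝ} (hs : 0 < s)
    (hz : ∀ i, ‖z i‖ ^ 2 + 1 < 2 * (z i).im * s) (x : ι → ℂ) :
    0 ≤ (∑ i, ∑ j, x i * conj (x j) *
      (F (z i) / (z i - conj (z j) - (1 + z i * conj (z j)) * I / s))).re := by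
  have hsub : closedBall (s * I) |√(s ^ 2 - 1)| ⊆ {z | 0 < z.im} := by
    rw [abs_of_nonneg (Real.sqrt_nonneg _)]
    exact closedBall_mul_I_subset hs
  have hmem (i : ι) : z i ∈ ball (s * I) |√(s ^ 2 - 1)| := by
    rw [abs_of_nonneg (Real.sqrt_nonneg _)]
    exact mem_ball_mul_I (hz i)
  have hdiff : DiffContOnCl ℂ (fun ζ ↦ -I * F ζ) (ball (s * I) |√(s ^ 2 - 1)|) :=
    ((hF.mono hsub).const_mul (-I)).diffContOnCl_ball subset_rfl
  have hdisc := re_sum_div_sq_sub_nonneg hdiff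
    (fun ζ hζ ↦ by simpa using hpos ζ (hsub (sphere_subset_closedBall hζ))) hmem x
  have hterm (i j : ι) : x i * conj (x j) *
      (F (z i) / (z i - conj (z j) - (1 + z i * conj (z j)) * I / s)) = s * (x i * conj (x j) *
        (-I * F (z i) / ((√(s ^ 2 - 1) : ℝ) ^ 2 - (z i - s * I) * conj (z j - s * I)))) := by
    have hsc : (s : ℂ) ≠ 0 := ofReal_ne_zero.2 hs.ne'
    have hsq : ((√(s ^ 2 - 1) : ℝ) : ℂ) ^ 2 = s ^ 2 - 1 := by
      exact_mod_cast Real.sq_sqrt (Real.sqrt_pos.1 (pos_of_mem_ball (mem_ball_mul_I (hz i)))).le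
    have hker : (s : ℂ) ^ 2 - 1 - (z i - s * I) * conj (z j - s * I) =
        -I * s * (z i - conj (z j) - (1 + z i * conj (z j)) * I / s) := by
      simp only [map_sub, map_mul, conj_ofReal, conj_I]
      field_simp
      linear_combination (s ^ 2 - 1 - z i * conj (z j)) * I_sq
    rw [hsq, hker, mul_assoc (-I), mul_div_mul_left _ _ (neg_ne_zero.2 I_ne_zero)]
    field_simp
  simp only [hterm, ← Finset.mul_sum, re_ofReal_mul]
  exact mul_nonneg hs.le hdisc

lemma sub_conj_ne_zero {z w : ℂ} (hz : 0 < z.im) (hw : 0 < w.im) : z - conj w ≠ 0 := by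
  intro h
  have him : z.im + w.im = 0 := by simpa using congrArg im h
  linarith

lemma re_pickForm_nonneg {F : ℂ → ℂ} (hF : DifferentiableOn ℂ F {z | 0 < z.im})
    (hpos : ∀ z : ℂ, 0 < z.im → 0 ≤ (F z).im) {z : ι → ℂ} (hz : ∀ i, 0 < (z i).im) (x : ι → ℂ) :
    0 ≤ (pickForm F z x).re := by
  -- Discs with centre `s I` and squared radius `s² - 1` exhaust the upper half-plane as `s → ∞`.
  have hlim : Tendsto (fun s : ℝ ↦ (∑ i, ∑ j, x i * conj (x j) *
      (F (z i) / (z i - conj (z j) - (1 + z i * conj (z j)) * I / s))).re) atTop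
      (𝓝 (∑ i, ∑ j, x i * conj (x j) * (F (z i) / (z i - conj (z j)))).re) := by
    refine (continuous_re.tendsto _).comp <| tendsto_finsetSum _ fun i _ ↦
      tendsto_finsetSum _ fun j _ ↦ (tendsto_const_nhds.div ?_
        (sub_conj_ne_zero (hz i) (hz j))).const_mul _
    simpa [div_eq_mul_inv] using tendsto_const_nhds.sub ((tendsto_inv₀_cobounded.comp
      (RCLike.tendsto_ofReal_atTop_cobounded ℂ)).const_mul ((1 + z i * conj (z j)) * I))
  have hev : ∀ᶠ s : ℝ in atTop, ∀ i, ‖z i‖ ^ 2 + 1 < 2 * (z i).im * s :=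
    eventually_all.2 fun i ↦
      (tendsto_id.const_mul_atTop (mul_pos two_pos (hz i))).eventually_gt_atTop _
  rw [re_pickForm]
  refine mul_nonneg zero_le_two (ge_of_tendsto hlim ?_)
  filter_upwards [hev, eventually_gt_atTop 0] with s hsz hs
  exact re_sum_div_sub_conj_sub_nonneg hF hpos hs hsz x

end Pick

section Hankel

variable {ι : Type*} [Fintype ι]

lemma pickForm_sub (F G : ℂ → ℂ) (z x : ι → ℂ) :
    pickForm (fun ζ ↦ F ζ - G ζ) z x = pickForm F z x - pickForm G z x := by
  simp only [pickForm, ← Finset.sum_sub_distrib]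
  refine Finset.sum_congr rfl fun i _ ↦ Finset.sum_congr rfl fun j _ ↦ ?_
  rw [map_sub]
  ring

lemma pickForm_sum_mul {κ : Type*} (s : Finset κ) (a : κ → ℝ) (G : κ → ℂ → ℂ) (z x : ι → ℂ) :
    pickForm (fun ζ ↦ ∑ m ∈ s, a m * G m ζ) z x = ∑ m ∈ s, a m * pickForm (G m) z x := by
  simp only [pickForm, map_sum, map_mul, conj_ofReal, ← Finset.sum_sub_distrib, ← mul_sub,
    Finset.sum_div, Finset.mul_sum]
  refine .trans (Finset.sum_congr rfl fun i _ ↦ ?_) Finset.sum_comm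
  refine .trans (Finset.sum_congr rfl fun j _ ↦ ?_) Finset.sum_comm
  exact Finset.sum_congr rfl fun m _ ↦ by ring

lemma pow_succ_sub_pow_succ_div_sub {z w : ℂ} (h : z ≠ w) (m : ℕ) :
    (z ^ (m + 1) - w ^ (m + 1)) / (z - w) = ∑ p ∈ Finset.range (m + 1), z ^ p * w ^ (m - p) := by
  rw [← geom_sum₂_mul, mul_div_cancel_right₀ _ (sub_ne_zero.2 h)]
  rfl

lemma pickForm_pow_succ {z : ι → ℂ} (hz : ∀ i, 0 < (z i).im) (x : ι → ℂ) (m : ℕ) :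
    pickForm (fun ζ ↦ ζ ^ (m + 1)) z x = ∑ p ∈ Finset.range (m + 1),
      (∑ i, x i * z i ^ p) * conj (∑ i, x i * z i ^ (m - p)) := by
  simp only [pickForm, map_pow, map_sum, map_mul, Finset.sum_mul_sum]
  refine .trans (Finset.sum_congr rfl fun i _ ↦ ?_) Finset.sum_comm
  refine .trans (Finset.sum_congr rfl fun j _ ↦ ?_) Finset.sum_comm
  rw [pow_succ_sub_pow_succ_div_sub (sub_ne_zero.1 (sub_conj_ne_zero (hz i) (hz j))),
    Finset.mul_sum]
  exact Finset.sum_congr rfl fun p _ ↦ by ring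

lemma pickForm_sum_pow (a : ℕ → ℝ) (N : ℕ) {z : ι → ℂ} (hz : ∀ i, 0 < (z i).im) (x : ι → ℂ) :
    pickForm (fun ζ ↦ ∑ m ∈ Finset.range (N + 1), a m * ζ ^ m) z x =
      ∑ p ∈ Finset.range N, ∑ q ∈ Finset.range (N - p),
        a (p + q + 1) * ((∑ i, x i * z i ^ p) * conj (∑ i, x i * z i ^ q)) := by
  have hconst : pickForm (fun ζ ↦ ζ ^ 0) z x = 0 := by simp [pickForm]
  rw [pickForm_sum_mul, Finset.sum_range_succ', hconst, mul_zero, add_zero,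
    ← Finset.sum_range_diag_flip]
  refine Finset.sum_congr rfl fun m _ ↦ ?_
  rw [pickForm_pow_succ hz, Finset.mul_sum]
  refine Finset.sum_congr rfl fun p hp ↦ ?_
  rw [Nat.add_sub_cancel' (Finset.mem_range_succ_iff.1 hp)]

lemma sum_vecMul_inv_vandermonde_mul_pow {N : ℕ} {z : Fin N → ℂ} (hz : Function.Injective z)
    (w : Fin N → ℂ) (p : Fin N) :
    ∑ i, (w ᵥ* (Matrix.vandermonde z)⁻¹) i * z i ^ (p : ℕ) = w p := by
  have hdet : IsUnit (Matrix.vandermonde z).det :=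
    (Matrix.det_vandermonde_ne_zero_iff.2 hz).isUnit
  have hinv : w ᵥ* (Matrix.vandermonde z)⁻¹ ᵥ* Matrix.vandermonde z = w := by
    rw [Matrix.vecMul_vecMul, Matrix.nonsing_inv_mul _ hdet, Matrix.vecMul_one]
  exact congrFun hinv p

lemma exists_continuous_sum_mul_pow_eq {n : ℕ} {z : Fin (2 * n + 1) → ℂ} (hz : Function.Injective z)
    {y : ℕ → ℝ} (hy : ∀ p, n < p → y p = 0) :
    ∃ x : ℝ → Fin (2 * n + 1) → ℂ, Continuous x ∧
      ∀ ε : ℝ, ∀ p < 2 * n + 1, ∑ i, x ε i * (ε * z i) ^ p = (ε ^ n * y p : ℝ) := by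
  let w (ε : ℝ) (p : Fin (2 * n + 1)) : ℂ := (ε ^ (n - p) * y p : ℝ)
  refine ⟨fun ε ↦ w ε ᵥ* (Matrix.vandermonde z)⁻¹, by fun_prop, fun ε p hp ↦ ?_⟩
  have hdual : ∑ i, (w ε ᵥ* (Matrix.vandermonde z)⁻¹) i * z i ^ p = (ε ^ (n - p) * y p : ℝ) :=
    sum_vecMul_inv_vandermonde_mul_pow hz (w ε) ⟨p, hp⟩
  simp only [mul_pow, mul_left_comm _ ((ε : ℂ) ^ p), ← Finset.mul_sum, hdual]
  rcases le_or_gt p n with hpn | hpn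
  · rw [← ofReal_pow, ← ofReal_mul, ← mul_assoc, ← pow_add, Nat.add_sub_cancel' hpn]
  · rw [hy p hpn, mul_zero, mul_zero, ofReal_zero, mul_zero]

lemma isLittleO_pickForm_mul {E : ℂ → ℂ} {m : ℕ}
    (hE : E =o[𝓝[{z | 0 < z.im}] 0] fun z ↦ z ^ (m + 1)) {z : ι → ℂ} (hz : ∀ i, 0 < (z i).im)
    {x : ℝ → ι → ℂ} (hx : ∀ i, (fun ε ↦ x ε i) =O[𝓝[>] 0] fun _ ↦ (1 : ℝ)) :
    (fun ε : ℝ ↦ pickForm E (fun i ↦ ε * z i) (x ε)) =o[𝓝[>] 0] fun ε ↦ ε ^ m := by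
  have hray (i : ι) : Tendsto (fun ε : ℝ ↦ ε * z i) (𝓝[>] 0) (𝓝[{z | 0 < z.im}] 0) := by
    refine tendsto_nhdsWithin_iff.2 ⟨tendsto_nhdsWithin_of_tendsto_nhds ?_, ?_⟩
    · simpa using (continuous_ofReal.tendsto 0).mul_const (z i)
    · filter_upwards [self_mem_nhdsWithin] with ε hε
      simpa using mul_pos hε (hz i)
  have hEray (i : ι) : (fun ε : ℝ ↦ E (ε * z i)) =o[𝓝[>] 0] fun ε ↦ ε ^ (m + 1) := by
    refine (hE.comp_tendsto (hray i)).trans_isBigO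
      (.of_bound (‖z i‖ ^ (m + 1)) (.of_forall fun ε ↦ ?_))
    simp [mul_pow, mul_comm]
  have hconj (f : ℝ → ℂ) : (fun ε ↦ conj (f ε)) =O[𝓝[>] 0] f :=
    conjCLE.toContinuousLinearMap.isBigO_comp f _
  unfold pickForm
  refine .fun_sum fun i _ ↦ .fun_sum fun j _ ↦ ?_
  have hweight : (fun ε ↦ x ε i * conj (x ε j)) =O[𝓝[>] 0] fun _ ↦ (1 : ℝ) := by
    simpa using (hx i).mul ((hconj _).trans (hx j))
  have hnum : (fun ε : ℝ ↦ E (ε * z i) - conj (E (ε * z j))) =o[𝓝[>] 0] fun ε ↦ ε ^ (m + 1) :=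
    (hEray i).sub ((hconj _).trans_isLittleO (hEray j))
  have hden : (fun ε : ℝ ↦ (ε * z i - conj (ε * z j))⁻¹) =O[𝓝[>] 0] fun ε ↦ ε⁻¹ := by
    refine .of_bound ‖(z i - conj (z j))⁻¹‖ (.of_forall fun ε ↦ ?_)
    rw [map_mul, conj_ofReal, ← mul_sub, mul_inv, norm_mul, mul_comm, ← ofReal_inv, norm_real]
  refine (hweight.mul_isLittleO (hnum.mul_isBigO hden)).congr' .rfl ?_
  filter_upwards [self_mem_nhdsWithin] with ε hε
  rw [one_mul, pow_succ, mul_inv_cancel_right₀ (ne_of_gt hε)]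

/-- The `n × n` Hankel matrix of the sequence `a`, with entries `a 1, …, a (2 n - 1)`: since indices
in `Fin n` start at `0`, the entry `a (i + j + 1)` is the usual `a_{i+j-1}`, and `a 0` is absent. -/
def hankel (a : ℕ → ℝ) (n : ℕ) : Matrix (Fin n) (Fin n) ℝ :=
  Matrix.of fun i j ↦ a (i + j + 1)

lemma hankel_isHermitian (a : ℕ → ℝ) (n : ℕ) : (hankel a n).IsHermitian := by
  ext i j
  simp [hankel, add_comm]

lemma pickForm_sum_pow_of_moments (a : ℕ → ℝ) {n : ℕ} {y : ℕ → ℝ} (hy : ∀ p, n < p → y p = 0)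
    {z : ι → ℂ} (hz : ∀ i, 0 < (z i).im) {x : ι → ℂ}
    (hx : ∀ p < 2 * n + 1, ∑ i, x i * z i ^ p = y p) :
    pickForm (fun ζ ↦ ∑ m ∈ Finset.range (2 * n + 2), a m * ζ ^ m) z x =
      (∑ i ∈ Finset.range (n + 1), ∑ j ∈ Finset.range (n + 1), y i * a (i + j + 1) * y j : ℝ) := by
  have hzero (p : ℕ) (hp : p ∉ Finset.range (n + 1)) : y p = 0 :=
    hy p (Nat.lt_of_succ_le (by simpa only [Finset.mem_range, not_lt] using hp))
  rw [pickForm_sum_pow a (2 * n + 1) hz x]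
  calc
    _ = ∑ p ∈ Finset.range (2 * n + 1), ∑ q ∈ Finset.range (2 * n + 1 - p),
          ((y p * a (p + q + 1) * y q : ℝ) : ℂ) := by
      refine Finset.sum_congr rfl fun p hp ↦ Finset.sum_congr rfl fun q hq ↦ ?_
      rw [Finset.mem_range] at hp hq
      rw [hx p hp, hx q (by lia), conj_ofReal]
      push_cast
      ring
    _ = ∑ p ∈ Finset.range (n + 1), ∑ q ∈ Finset.range (2 * n + 1 - p),
          ((y p * a (p + q + 1) * y q : ℝ) : ℂ) := by
      refine (Finset.sum_subset (Finset.range_mono (by lia)) fun p _ hp ↦ ?_).symm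
      simp only [hzero p hp, zero_mul, ofReal_zero, Finset.sum_const_zero]
    _ = _ := by
      rw [ofReal_sum]
      refine Finset.sum_congr rfl fun p hp ↦ ?_
      rw [ofReal_sum]
      rw [Finset.mem_range] at hp
      refine (Finset.sum_subset (Finset.range_mono (by lia)) fun q _ hq ↦ ?_).symm
      rw [hzero q hq, mul_zero, ofReal_zero]

section

variable {F : ℂ → ℂ} {a : ℕ → ℝ} {n : ℕ}

lemma sum_hankel_nonneg (hF : DifferentiableOn ℂ F {z | 0 < z.im})
    (hpos : ∀ z : ℂ, 0 < z.im → 0 ≤ (F z).im)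
    (hFa : (fun z ↦ F z - ∑ m ∈ Finset.range (2 * n + 2), a m * z ^ m)
      =o[𝓝[{z | 0 < z.im}] 0] fun z ↦ z ^ (2 * n + 1))
    {y : ℕ → ℝ} (hy : ∀ p, n < p → y p = 0) :
    0 ≤ ∑ i ∈ Finset.range (n + 1), ∑ j ∈ Finset.range (n + 1), y i * a (i + j + 1) * y j := by
  -- For nodes `ε z k` and weights with moments `ε ^ n * y p`, the Pick form is `ε ^ (2 n) Q`, where
  -- `Q` is the Hankel form at `y`, up to an error which is negligible as `ε → 0`.
  set Q := ∑ i ∈ Finset.range (n + 1), ∑ j ∈ Finset.range (n + 1), y i * a (i + j + 1) * y j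
  set z : Fin (2 * n + 1) → ℂ := fun k ↦ (k + 1) * I
  have hz (k) : 0 < (z k).im := by
    simpa [z] using Nat.cast_add_one_pos (α := ℝ) (k : ℕ)
  have hinj : Function.Injective z := fun k l hkl ↦ by
    simpa [z, Fin.val_inj] using hkl
  obtain ⟨x, hxcont, hxmom⟩ := exists_continuous_sum_mul_pow_eq hinj hy
  have hpoly (ε : ℝ) (hε : 0 < ε) :
      pickForm (fun ζ ↦ ∑ m ∈ Finset.range (2 * n + 2), a m * ζ ^ m) (fun i ↦ ε * z i) (x ε) =
        (ε ^ (2 * n) * Q : ℝ) := by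
    rw [pickForm_sum_pow_of_moments a (fun p hp ↦ by rw [hy p hp, mul_zero])
      (fun i ↦ by simpa using mul_pos hε (hz i)) (hxmom ε)]
    simp only [Q, Finset.mul_sum]
    refine congrArg _ (Finset.sum_congr rfl fun i _ ↦ Finset.sum_congr rfl fun j _ ↦ ?_)
    ring
  have herror : (fun ε : ℝ ↦ pickForm (fun z ↦ F z - ∑ m ∈ Finset.range (2 * n + 2), a m * z ^ m)
      (fun i ↦ ε * z i) (x ε)) =o[𝓝[>] 0] fun ε ↦ ε ^ (2 * n) :=
    isLittleO_pickForm_mul hFa hz fun i ↦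
      ((continuous_apply i).comp hxcont).continuousWithinAt.tendsto.isBigO_one ℝ
  have hlim : Tendsto (fun ε : ℝ ↦ Q + (pickForm (fun z ↦ F z - ∑ m ∈ Finset.range (2 * n + 2),
      a m * z ^ m) (fun i ↦ ε * z i) (x ε)).re / ε ^ (2 * n)) (𝓝[>] 0) (𝓝 Q) := by
    have hre := (reCLM.isBigO_comp _ _).trans_isLittleO herror
    simpa using hre.tendsto_div_nhds_zero.const_add Q
  refine ge_of_tendsto hlim ?_
  filter_upwards [self_mem_nhdsWithin] with ε (hε : 0 < ε)
  rw [pickForm_sub, hpoly ε hε, sub_re, ofReal_re, sub_div,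
    mul_div_cancel_left₀ _ (pow_pos hε _).ne', add_sub_cancel]
  exact div_nonneg (re_pickForm_nonneg hF hpos (fun i ↦ by simpa using mul_pos hε (hz i)) (x ε))
    (pow_nonneg hε.le _)

theorem posSemidef_hankel (hF : DifferentiableOn ℂ F {z | 0 < z.im})
    (hpos : ∀ z : ℂ, 0 < z.im → 0 ≤ (F z).im)
    (hFa : (fun z ↦ F z - ∑ m ∈ Finset.range (2 * n + 2), a m * z ^ m)
      =o[𝓝[{z | 0 < z.im}] 0] fun z ↦ z ^ (2 * n + 1)) :
    (hankel a (n + 1)).PosSemidef := by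
  refine .of_dotProduct_mulVec_nonneg (hankel_isHermitian a _) fun y ↦ ?_
  have hnonneg := sum_hankel_nonneg hF hpos hFa
    (y := fun p ↦ if hp : p < n + 1 then y ⟨p, hp⟩ else 0) fun p hp ↦ dif_neg (by lia)
  simpa [dotProduct, Matrix.mulVec, hankel, Finset.sum_range, Finset.mul_sum,
    mul_assoc, Fin.is_le] using hnonneg

end

end Hankel

section Taylor

lemma isBigO_sub_sum_iteratedDeriv {𝕜 : Type*} [NontriviallyNormedField 𝕜] [CharZero 𝕜]
    [CompleteSpace 𝕜] {F : 𝕜 → 𝕜} {c : 𝕜} (hF : AnalyticAt 𝕜 F c) (n : ℕ) :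
    (fun z ↦ F (c + z) - ∑ m ∈ Finset.range n, iteratedDeriv m F c / m.factorial * z ^ m)
      =O[𝓝 0] fun z ↦ z ^ n := by
  have hO := hF.hasFPowerSeriesAt.isBigO_sub_partialSum_pow n
  simp only [FormalMultilinearSeries.partialSum, FormalMultilinearSeries.ofScalars_apply_eq,
    smul_eq_mul, ← norm_pow] at hO
  exact hO.of_norm_right

lemma eventually_iteratedDeriv_ofReal {F : ℂ → ℂ} {g : ℝ → ℝ} {x : ℝ} (hF : AnalyticAt ℂ F x)
    (hFg : ∀ᶠ t : ℝ in 𝓝 x, F t = g t) (n : ℕ) :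
    ∀ᶠ t : ℝ in 𝓝 x, iteratedDeriv n F t = iteratedDeriv n g t := by
  induction n with
  | zero => simpa only [iteratedDeriv_zero] using hFg
  | succ n ih =>
    have hcoe : Tendsto ((↑) : ℝ → ℂ) (𝓝 x) (𝓝 x) := continuous_ofReal.tendsto x
    filter_upwards [ih.eventually_nhds, hcoe.eventually hF.eventually_analyticAt] with t ht hFt
    have hderiv : HasDerivAt (iteratedDeriv n F) (iteratedDeriv (n + 1) F t) t := by
      rw [iteratedDeriv_succ, iteratedDeriv_eq_iterate]
      exact (AnalyticAt.iterated_deriv hFt n).differentiableAt.hasDerivAt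
    have hreal : HasDerivAt (iteratedDeriv n g) (iteratedDeriv (n + 1) F t).re t :=
      hderiv.real_of_complex.congr_of_eventuallyEq (ht.mono fun s hs ↦ by
        simp only [hs, ofReal_re])
    have hcomplex := hderiv.comp_ofReal.congr_of_eventuallyEq (ht.mono fun s hs ↦ hs.symm)
    rw [hcomplex.unique hreal.ofReal_comp, iteratedDeriv_succ (f := g), hreal.deriv]

theorem posSemidef_hankel_iteratedDeriv {F : ℂ → ℂ} {g : ℝ → ℝ}
    (hF : DifferentiableOn ℂ F {z | 0 < z.im})
    (hpos : ∀ z : ℂ, 0 < z.im → 0 ≤ (F z).im) (hF0 : AnalyticAt ℂ F 0)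
    (hFg : ∀ᶠ t : ℝ in 𝓝 0, F t = g t) (n : ℕ) :
    (hankel (fun m ↦ iteratedDeriv m g 0 / m.factorial) n).PosSemidef := by
  cases n with
  | zero => exact Subsingleton.elim (hankel _ 0) 0 ▸ Matrix.PosSemidef.zero
  | succ n =>
    refine posSemidef_hankel hF hpos ?_
    have hcoeff (m : ℕ) : iteratedDeriv m F 0 = iteratedDeriv m g 0 := by
      simpa using (eventually_iteratedDeriv_ofReal (x := 0) (by simpa using hF0) hFg m).self_of_nhds
    have htaylor := (isBigO_sub_sum_iteratedDeriv hF0 (2 * n + 2)).trans_isLittleO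
      (isLittleO_pow_pow (Nat.lt_succ_self (2 * n + 1)))
    simpa [hcoeff] using htaylor.mono nhdsWithin_le_nhds

end Taylor

section SecondOrder

variable {θ f g : ℝ → ℝ}

/-- The Wronskian `f g' - f' g`, which is constant for two solutions of the same equation. -/
def wronskian (f g : ℝ → ℝ) (t : ℝ) : ℝ := f t * deriv g t - deriv f t * g t

lemma wronskian_mul_eq (f g u : ℝ → ℝ) (t : ℝ) :
    wronskian f g t * u t = wronskian u g t * f t + wronskian f u t * g t := by
  unfold wronskian
  ring

namespace IsSolution

lemma hasDerivAt (hf : IsSolution θ f) (t : ℝ) : HasDerivAt f (deriv f t) t :=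
  (hf.1.differentiable (by simp)).differentiableAt.hasDerivAt

lemma hasDerivAt_deriv (hf : IsSolution θ f) (t : ℝ) : HasDerivAt (deriv f) (-(θ t * f t)) t := by
  have hderiv : Differentiable ℝ (deriv f) :=
    (hf.1.iterate_deriv 1).differentiable (by simp)
  rw [← eq_neg_of_add_eq_zero_left (hf.2 t)]
  exact (hderiv t).hasDerivAt

lemma wronskian_eq (hf : IsSolution θ f) (hg : IsSolution θ g) (s t : ℝ) :
    wronskian f g s = wronskian f g t := by
  have hderiv (r : ℝ) : HasDerivAt (wronskian f g) 0 r := by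
    refine (((hf.hasDerivAt r).mul (hg.hasDerivAt_deriv r)).sub
      ((hf.hasDerivAt_deriv r).mul (hg.hasDerivAt r))).congr_deriv ?_
    ring
  exact is_const_of_deriv_eq_zero (fun r ↦ (hderiv r).differentiableAt)
    (fun r ↦ (hderiv r).deriv) s t

lemma const_mul_add_const_mul (hf : IsSolution θ f) (hg : IsSolution θ g) (a b : ℝ) :
    IsSolution θ fun t ↦ a * f t + b * g t := by
  refine ⟨(contDiff_const.mul hf.1).add (contDiff_const.mul hg.1), fun t ↦ ?_⟩
  have hderiv : deriv (fun t ↦ a * f t + b * g t) = fun t ↦ a * deriv f t + b * deriv g t :=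
    funext fun s ↦ (((hf.hasDerivAt s).const_mul a).add ((hg.hasDerivAt s).const_mul b)).deriv
  have hderiv₂ : deriv (fun t ↦ a * deriv f t + b * deriv g t) t = _ :=
    (((hf.hasDerivAt_deriv t).const_mul a).add ((hg.hasDerivAt_deriv t).const_mul b)).deriv
  rw [hderiv, hderiv₂]
  ring

lemma eventually_ne_zero (hf : IsSolution θ f) {x : ℝ} (hW : wronskian f g x ≠ 0) :
    ∀ᶠ t in 𝓝[≠] x, f t ≠ 0 := by
  by_cases hfx : f x = 0
  · refine (hf.hasDerivAt x).eventually_ne fun hderiv ↦ hW ?_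
    rw [wronskian, hfx, hderiv, zero_mul, zero_mul, sub_zero]
  · exact (hf.hasDerivAt x).continuousAt.continuousWithinAt.eventually_ne hfx

lemma exists_isFundPair (hf : IsSolution θ f) (hg : IsSolution θ g) {x : ℝ}
    (hW : wronskian f g x ≠ 0) : ∃ u₁ u₂, IsFundPair θ x u₁ u₂ := by
  have hderiv (a b : ℝ) : deriv (fun t ↦ a * f t + b * g t) x = a * deriv f x + b * deriv g x :=
    (((hf.hasDerivAt x).const_mul a).add ((hg.hasDerivAt x).const_mul b)).deriv
  set W := wronskian f g x with hWdef
  refine ⟨_, _, hf.const_mul_add_const_mul hg (deriv g x / W) (-deriv f x / W),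
    hf.const_mul_add_const_mul hg (-g x / W) (f x / W), ?_, ?_, ?_, ?_⟩
  · field_simp
    rw [hWdef, wronskian]
    ring
  · rw [hderiv]
    ring
  · ring
  · rw [hderiv]
    field_simp
    rw [hWdef, wronskian]
    ring

end IsSolution

lemma IsFundPair.wronskian_mul_fst {u₁ u₂ : ℝ → ℝ} {x : ℝ} (hu : IsFundPair θ x u₁ u₂)
    (hf : IsSolution θ f) (hg : IsSolution θ g) (t : ℝ) :
    wronskian f g x * u₁ t = deriv g x * f t - deriv f x * g t := by
  obtain ⟨hu₁, -, hu₁x, hu₁x', -, -⟩ := hu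
  rw [hf.wronskian_eq hg x t, wronskian_mul_eq, hu₁.wronskian_eq hg t x, hf.wronskian_eq hu₁ t x,
    wronskian, wronskian, hu₁x, hu₁x']
  ring

lemma IsFundPair.wronskian_mul_snd {u₁ u₂ : ℝ → ℝ} {x : ℝ} (hu : IsFundPair θ x u₁ u₂)
    (hf : IsSolution θ f) (hg : IsSolution θ g) (t : ℝ) :
    wronskian f g x * u₂ t = f x * g t - g x * f t := by
  obtain ⟨-, hu₂, -, -, hu₂x, hu₂x'⟩ := hu
  rw [hf.wronskian_eq hg x t, wronskian_mul_eq, hu₂.wronskian_eq hg t x, hf.wronskian_eq hu₂ t x,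
    wronskian, wronskian, hu₂x, hu₂x']
  ring

end SecondOrder

section Extension

/-- The fractional linear map `w ↦ (a w - b) / (d - c w)`. With `a, b, c, d` the values at `x` of
`f₁, f₂, f₁', f₂'` it maps `f₂ / f₁` to the quotient `u₂ / u₁` of the fundamental pair at `x`. -/
def realMobius (a b c d : ℝ) (w : ℂ) : ℂ := (a * w - b) / (d - c * w)

variable {a b c d : ℝ}

lemma sub_mul_ne_zero_of_im_ne_zero (h : a * d - c * b ≠ 0) {w : ℂ} (hw : w.im ≠ 0) :
    (d : ℂ) - c * w ≠ 0 := by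
  intro hden
  have hc : c = 0 := by simpa [hw] using congrArg im hden
  have hd : d = 0 := by simpa [hc] using congrArg re hden
  exact h (by rw [hc, hd]; ring)

lemma im_realMobius (a b c d : ℝ) (w : ℂ) :
    (realMobius a b c d w).im = (a * d - c * b) * w.im / normSq (d - c * w) := by
  rw [realMobius, div_im, ← sub_div]
  congr 1
  simp only [sub_re, sub_im, re_ofReal_mul, im_ofReal_mul, ofReal_re, ofReal_im]
  ring

lemma tendsto_realMobius_of_norm_tendsto_atTop {α : Type*} {l : Filter α} {H : α → ℂ}
    (hH : Tendsto (fun z ↦ ‖H z‖) l atTop) (hc : c ≠ 0) :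
    Tendsto (fun z ↦ realMobius a b c d (H z)) l (𝓝 (-a / c)) := by
  have hinv : Tendsto (fun z ↦ (H z)⁻¹) l (𝓝 0) :=
    tendsto_inv₀_cobounded.comp (tendsto_norm_atTop_iff_cobounded.1 hH)
  have hlim : Tendsto (fun z ↦ (a - b * (H z)⁻¹) / (d * (H z)⁻¹ - c)) l
      (𝓝 ((a - b * 0) / (d * 0 - c))) :=
    ((hinv.const_mul _).const_sub _).div ((hinv.const_mul _).sub_const _) (by simpa using hc)
  have hval : ((a : ℂ) - b * 0) / (d * 0 - c) = -a / c := by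
    rw [mul_zero, mul_zero, sub_zero, zero_sub, div_neg, neg_div]
  refine hval ▸ hlim.congr' ?_
  filter_upwards [hH.eventually_ne_atTop 0] with z hz
  rw [norm_ne_zero_iff] at hz
  rw [realMobius, ← mul_div_mul_right _ _ hz, sub_mul, sub_mul, mul_assoc, mul_assoc,
    inv_mul_cancel₀ hz, mul_one, mul_one]

lemma tendsto_realMobius_of_tendsto {α : Type*} {l : Filter α} {H : α → ℂ} {w : ℂ}
    (hH : Tendsto H l (𝓝 w)) (hden : d - c * w ≠ 0) :
    Tendsto (fun z ↦ realMobius a b c d (H z)) l (𝓝 (realMobius a b c d w)) :=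
  ((hH.const_mul _).sub_const _).div ((hH.const_mul _).const_sub _) hden

lemma tendsto_realMobius_zero (h : a * d - c * b ≠ 0) {α : Type*} {l : Filter α} {H : α → ℂ}
    (hfin : a ≠ 0 → Tendsto H l (𝓝 (b / a : ℝ))) (hinf : a = 0 → Tendsto (‖H ·‖) l atTop) :
    (∀ᶠ z in l, (d : ℂ) - c * H z ≠ 0) ∧ Tendsto (fun z ↦ realMobius a b c d (H z)) l (𝓝 0) := by
  rcases eq_or_ne a 0 with rfl | ha
  · have hc : c ≠ 0 := fun hc ↦ h (by rw [hc]; ring)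
    refine ⟨?_, by
      simpa using tendsto_realMobius_of_norm_tendsto_atTop (a := 0) (hinf rfl) hc⟩
    filter_upwards [(hinf rfl).eventually_ne_atTop ‖(d / c : ℂ)‖] with z hz hden
    exact hz (by rw [sub_eq_zero.1 hden, mul_div_cancel_left₀ _ (ofReal_ne_zero.2 hc)])
  · have hden : (d : ℂ) - c * (b / a : ℝ) ≠ 0 := by
      rw [← ofReal_mul, ← ofReal_sub, ofReal_ne_zero]
      contrapose! h
      field_simp at h
      linarith
    refine ⟨((hfin ha).const_mul _).const_sub _ |>.eventually_ne hden, ?_⟩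
    have hzero : realMobius a b c d (b / a : ℝ) = 0 := by
      rw [realMobius, ← ofReal_mul, mul_div_cancel₀ _ ha, sub_self, zero_div]
    exact hzero ▸ tendsto_realMobius_of_tendsto (hfin ha) hden

lemma differentiableAt_realMobius {w : ℂ} (hden : (d : ℂ) - c * w ≠ 0) :
    DifferentiableAt ℂ (realMobius a b c d) w :=
  ((differentiableAt_id.const_mul _).sub_const _).div
    ((differentiableAt_id.const_mul _).const_sub _) hden

lemma IsFundPair.realMobius_div {θ f g u₁ u₂ : ℝ → ℝ} {x : ℝ} (hu : IsFundPair θ x u₁ u₂)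
    (hf : IsSolution θ f) (hg : IsSolution θ g) (hW : wronskian f g x ≠ 0) {t : ℝ}
    (hft : f t ≠ 0) :
    realMobius (f x) (g x) (deriv f x) (deriv g x) (g t / f t : ℝ) = (u₂ t / u₁ t : ℝ) := by
  rw [← mul_div_mul_left (u₂ t) (u₁ t) hW, hu.wronskian_mul_fst hf hg, hu.wronskian_mul_snd hf hg,
    realMobius]
  norm_cast
  rw [← mul_div_mul_right _ _ hft]
  congr 2 <;> field_simp

lemma analyticAt_update_of_tendsto {G : ℂ → ℂ} {x y : ℂ}
    (hG : ∀ᶠ z in 𝓝[≠] x, DifferentiableAt ℂ G z) (hlim : Tendsto G (𝓝[≠] x) (𝓝 y)) :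
    AnalyticAt ℂ (Function.update G x y) x := by
  refine analyticAt_of_differentiable_on_punctured_nhds_of_continuousAt ?_
    (continuousAt_update_same.2 hlim)
  filter_upwards [hG, self_mem_nhdsWithin] with z hz hzx
  exact hz.congr_of_eventuallyEq <| (eventually_ne_nhds hzx).mono fun w hw ↦
    Function.update_of_ne hw _ _

/-- The strip `|Im z| < R` without the real zeros of `f`: the domain of the extension in `HypR`. -/
def zeroFreeStrip (f : ℝ → ℝ) (R : ℝ) : Set ℂ := {z | |z.im| < R ∧ ∀ t : ℝ, f t = 0 → z ≠ t}

lemma isOpen_zeroFreeStrip {f : ℝ → ℝ} (hf : Continuous f) (R : ℝ) :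
    IsOpen (zeroFreeStrip f R) := by
  have hzeros : IsClosed (((↑) : ℝ → ℂ) '' {t | f t = 0}) :=
    isometry_ofReal.isClosedEmbedding.isClosedMap _ (isClosed_eq hf continuous_const)
  have hset : zeroFreeStrip f R = {z | |z.im| < R} ∩ (((↑) : ℝ → ℂ) '' {t | f t = 0})ᶜ := by
    ext z
    simp only [zeroFreeStrip, mem_ofPred_eq, mem_inter_iff, mem_compl_iff, mem_image, not_exists,
      not_and, ne_comm, ne_eq]
  rw [hset]
  exact (isOpen_lt (continuous_abs.comp continuous_im) continuous_const).inter hzeros.isOpen_compl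

lemma ofReal_mem_zeroFreeStrip {f : ℝ → ℝ} {R t : ℝ} (hR : 0 < R) (ht : f t ≠ 0) :
    (t : ℂ) ∈ zeroFreeStrip f R := by
  refine ⟨by simpa using hR, fun s hs hst ↦ ht ?_⟩
  rwa [ofReal_injective hst]

lemma mem_zeroFreeStrip_of_im_pos (f : ℝ → ℝ) {R : ℝ} {z : ℂ} (hz : 0 < z.im) (hzR : z.im < R) :
    z ∈ zeroFreeStrip f R :=
  ⟨by rwa [abs_of_pos hz], fun t _ hzt ↦ hz.ne' (by rw [hzt, ofReal_im])⟩

lemma eventually_mem_zeroFreeStrip {f : ℝ → ℝ} {R x : ℝ} (hR : 0 < R)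
    (hf : ∀ᶠ t in 𝓝[≠] x, f t ≠ 0) : ∀ᶠ z in 𝓝[≠] (x : ℂ), z ∈ zeroFreeStrip f R := by
  have hre : Tendsto re (𝓝 (x : ℂ)) (𝓝 x) := continuous_re.tendsto (x : ℂ)
  have him : ∀ᶠ z : ℂ in 𝓝 (x : ℂ), |z.im| < R :=
    (continuous_abs.comp continuous_im).continuousAt.eventually_lt_const (by simpa using hR)
  filter_upwards [nhdsWithin_le_nhds (hre.eventually (eventually_nhdsWithin_iff.1 hf)),
    nhdsWithin_le_nhds him, self_mem_nhdsWithin] with z hz hzR hzx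
  refine ⟨hzR, ?_⟩
  rintro t ht rfl
  exact hz (fun htx ↦ hzx (congrArg ofReal htx)) ht

-- Replacing `f₂ / f₁` by `u₂ / u₁` removes the pole which `H` may have at `x`.
lemma HypR.exists_extension_punctured {θ u₁ u₂ : ℝ → ℝ} {R x : ℝ} (h : HypR θ R) (hR : 0 < R)
    (hu : IsFundPair θ x u₁ u₂) :
    ∃ G : ℂ → ℂ, (∀ᶠ z in 𝓝[≠] (x : ℂ), DifferentiableAt ℂ G z) ∧
      Tendsto G (𝓝[≠] (x : ℂ)) (𝓝 0) ∧
      (∀ z : ℂ, 0 < z.im → z.im < R → DifferentiableAt ℂ G z ∧ 0 < (G z).im) ∧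
      ∀ᶠ t : ℝ in 𝓝[≠] x, G t = (u₂ t / u₁ t : ℝ) := by
  obtain ⟨f, g, H, hf, hg, hW, hHf, hHd, hpole, hpos⟩ := h
  have hWx : wronskian f g x = f 0 * deriv g 0 - deriv f 0 * g 0 := hf.wronskian_eq hg x 0
  rw [← hWx] at hW hpos
  have hH {z : ℂ} (hz : z ∈ zeroFreeStrip f R) : DifferentiableAt ℂ H z :=
    hHd.differentiableAt ((isOpen_zeroFreeStrip hf.1.continuous R).mem_nhds hz)
  have hne := hf.eventually_ne_zero hW
  obtain ⟨hden, hlim⟩ := tendsto_realMobius_zero (l := 𝓝[≠] (x : ℂ)) hW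
    (fun hfx ↦ hHf x hfx ▸ (hH (ofReal_mem_zeroFreeStrip hR hfx)).continuousAt.continuousWithinAt)
    (hpole x)
  refine ⟨realMobius (f x) (g x) (deriv f x) (deriv g x) ∘ H, ?_, hlim, fun z hz hzR ↦ ?_, ?_⟩
  · filter_upwards [eventually_mem_zeroFreeStrip hR hne, hden] with z hz hzden
    exact (differentiableAt_realMobius hzden).comp z (hH hz)
  · have hWim : 0 < wronskian f g x * (H z).im := pos_of_mul_pos_left (hpos z hz hzR) hz.le
    have hden := sub_mul_ne_zero_of_im_ne_zero hW (right_ne_zero_of_mul hWim.ne')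
    refine ⟨(differentiableAt_realMobius hden).comp z
      (hH (mem_zeroFreeStrip_of_im_pos f hz hzR)), ?_⟩
    rw [Function.comp_apply, im_realMobius]
    exact div_pos hWim (normSq_pos.2 hden)
  · filter_upwards [hne] with t ht
    rw [Function.comp_apply, hHf t ht, hu.realMobius_div hf hg hW ht]

lemma HypR.exists_extension {θ u₁ u₂ : ℝ → ℝ} {R x : ℝ} (h : HypR θ R) (hR : 0 < R)
    (hu : IsFundPair θ x u₁ u₂) :
    ∃ G : ℂ → ℂ, AnalyticAt ℂ G x ∧
      (∀ z : ℂ, 0 < z.im → z.im < R → DifferentiableAt ℂ G z ∧ 0 < (G z).im) ∧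
      ∀ᶠ t : ℝ in 𝓝 x, G t = (u₂ t / u₁ t : ℝ) := by
  obtain ⟨G, hGx, hlim, hGupper, hGreal⟩ := h.exists_extension_punctured hR hu
  refine ⟨Function.update G x 0, analyticAt_update_of_tendsto hGx hlim, fun z hz hzR ↦ ?_, ?_⟩
  · have hzx : z ≠ x := by
      rintro rfl
      exact hz.ne' (ofReal_im x)
    obtain ⟨hGz, hpos⟩ := hGupper z hz hzR
    refine ⟨hGz.congr_of_eventuallyEq ((eventually_ne_nhds hzx).mono fun w hw ↦
      Function.update_of_ne hw _ _), ?_⟩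
    rwa [Function.update_of_ne hzx]
  · filter_upwards [eventually_nhdsWithin_iff.1 hGreal] with t ht
    rcases eq_or_ne t x with rfl | htx
    · rw [Function.update_self, hu.2.2.2.2.1, zero_div, ofReal_zero]
    · rw [Function.update_of_ne (ofReal_injective.ne htx), ht htx]

end Extension

section StripMap

variable {R : ℝ}

/-- The holomorphic extension of `gR R`; it maps the upper half-plane into the strip
`0 < Im w < R`. -/
def complexGR (R : ℝ) (z : ℂ) : ℂ := -((R / π : ℝ) : ℂ) * Complex.log (1 - (π / R : ℝ) * z)

lemma complexGR_zero (R : ℝ) : complexGR R 0 = 0 := by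
  rw [complexGR, mul_zero, sub_zero, Complex.log_one, mul_zero]

lemma gR_zero (R : ℝ) : gR R 0 = 0 := by
  rw [gR, mul_zero, sub_zero, Real.log_one, mul_zero]

lemma eventually_one_sub_mul_pos (κ : ℝ) : ∀ᶠ t : ℝ in 𝓝 0, 0 < 1 - κ * t :=
  (isOpen_lt continuous_const (by fun_prop)).mem_nhds (by simp)

lemma hasDerivAt_one_sub_mul (κ t : ℝ) : HasDerivAt (fun t ↦ 1 - κ * t) (-κ) t := by
  simpa using ((hasDerivAt_id t).const_mul κ).const_sub 1

lemma hasDerivAt_gR (hR : R ≠ 0) {t : ℝ} (ht : 1 - π / R * t ≠ 0) :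
    HasDerivAt (gR R) (1 - π / R * t)⁻¹ t := by
  refine (((hasDerivAt_one_sub_mul (π / R) t).log ht).const_mul _).congr_deriv ?_
  field_simp

lemma tendsto_add_gR (hR : R ≠ 0) (x : ℝ) : Tendsto (fun t ↦ x + gR R t) (𝓝 0) (𝓝 x) := by
  simpa [gR_zero] using ((hasDerivAt_gR hR (t := 0) (by simp)).const_add x).continuousAt.tendsto

lemma complexGR_ofReal {t : ℝ} (ht : 0 ≤ 1 - π / R * t) : complexGR R t = gR R t := by
  rw [complexGR, gR, ← ofReal_mul, ← ofReal_one, ← ofReal_sub, ← Complex.ofReal_log ht,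
    ← ofReal_neg, ← ofReal_mul]

lemma analyticAt_complexGR {z : ℂ} (hz : 1 - (π / R : ℝ) * z ∈ slitPlane) :
    AnalyticAt ℂ (complexGR R) z :=
  analyticAt_const.mul <|
    (analyticAt_const.sub (analyticAt_const.mul analyticAt_id)).clog hz

lemma im_one_sub_mul_neg (hR : 0 < R) {z : ℂ} (hz : 0 < z.im) :
    (1 - ((π / R : ℝ) : ℂ) * z).im < 0 := by
  rw [sub_im, one_im, im_ofReal_mul, zero_sub, neg_lt_zero]
  positivity

lemma analyticAt_complexGR_of_im_pos (hR : 0 < R) {z : ℂ} (hz : 0 < z.im) :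
    AnalyticAt ℂ (complexGR R) z :=
  analyticAt_complexGR (.inr (im_one_sub_mul_neg hR hz).ne)

lemma im_complexGR_mem_Ioo (hR : 0 < R) {z : ℂ} (hz : 0 < z.im) :
    (complexGR R z).im ∈ Ioo 0 R := by
  have him : (complexGR R z).im = -(R / π) * arg (1 - (π / R : ℝ) * z) := by
    rw [complexGR, ← ofReal_neg, im_ofReal_mul, log_im]
  have hscale : 0 < R / π := by positivity
  rw [him, mem_Ioo, neg_mul_comm]
  constructor
  · exact mul_pos hscale (neg_pos.2 (arg_neg_iff.2 (im_one_sub_mul_neg hR hz)))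
  · calc R / π * -arg (1 - (π / R : ℝ) * z) < R / π * π :=
          mul_lt_mul_of_pos_left (neg_lt.1 (neg_pi_lt_arg _)) hscale
      _ = R := div_mul_cancel₀ R pi_ne_zero

lemma HypR.detR_nonneg {θ u₁ u₂ : ℝ → ℝ} {x : ℝ} (h : HypR θ R) (hR : 0 < R)
    (hu : IsFundPair θ x u₁ u₂) (n : ℕ) : 0 ≤ DetR R x u₁ u₂ n := by
  obtain ⟨G, hGx, hGupper, hGreal⟩ := h.exists_extension hR hu
  have him (z : ℂ) : (x + complexGR R z).im = (complexGR R z).im := by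
    rw [add_im, ofReal_im, zero_add]
  have hslit : 1 - (π / R : ℝ) * (0 : ℂ) ∈ slitPlane := by
    rw [mul_zero, sub_zero]
    exact one_mem_slitPlane
  have hzero : AnalyticAt ℂ (fun z ↦ x + complexGR R z) 0 :=
    analyticAt_const.add (analyticAt_complexGR hslit)
  refine (posSemidef_hankel_iteratedDeriv (F := fun z ↦ G (x + complexGR R z)) ?_ ?_ ?_ ?_
    n).det_nonneg
  · intro z hz
    obtain ⟨hpos, hlt⟩ := im_complexGR_mem_Ioo hR hz
    exact ((hGupper _ (him z ▸ hpos) (him z ▸ hlt)).1.comp z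
      ((analyticAt_complexGR_of_im_pos hR hz).differentiableAt.const_add _)).differentiableWithinAt
  · intro z hz
    obtain ⟨hpos, hlt⟩ := im_complexGR_mem_Ioo hR hz
    exact (hGupper _ (him z ▸ hpos) (him z ▸ hlt)).2.le
  · exact AnalyticAt.comp (by rwa [complexGR_zero, add_zero]) hzero
  · filter_upwards [eventually_one_sub_mul_pos (π / R),
      (tendsto_add_gR hR.ne' x).eventually hGreal] with t ht hGt
    rw [complexGR_ofReal ht.le, ← ofReal_add, hGt]

end StripMap

section Evaluation

lemma det_hankel_three (a : ℕ → ℝ) :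
    (hankel a 3).det = a 1 * a 3 * a 5 + 2 * a 2 * a 3 * a 4 - a 3 ^ 3 - a 1 * a 4 ^ 2 -
      a 2 ^ 2 * a 5 := by
  have hdet : (hankel a 3).det = a 1 * a 3 * a 5 - a 1 * a 4 * a 4 - a 2 * a 2 * a 5 +
      a 2 * a 4 * a 3 + a 3 * a 2 * a 4 - a 3 * a 3 * a 3 := Matrix.det_fin_three _
  rw [hdet]
  ring

section Schwarzian

variable {g G r q q₁ q₂ : ℝ → ℝ} {t₀ : ℝ}

lemma iteratedDeriv_succ_eventuallyEq_mul {n : ℕ} {P P' : ℝ → ℝ}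
    (hg : iteratedDeriv n g =ᶠ[𝓝 t₀] fun t ↦ P t * G t)
    (hG : ∀ᶠ t in 𝓝 t₀, HasDerivAt G (-2 * r t * G t) t)
    (hP : ∀ᶠ t in 𝓝 t₀, HasDerivAt P (P' t + 2 * r t * P t) t) :
    iteratedDeriv (n + 1) g =ᶠ[𝓝 t₀] fun t ↦ P' t * G t := by
  rw [iteratedDeriv_succ]
  refine hg.deriv.trans ?_
  filter_upwards [hG, hP] with t hGt hPt
  rw [(hPt.fun_mul hGt).deriv]
  ring

lemma iteratedDeriv_three_eventuallyEq (hg : ∀ᶠ t in 𝓝 t₀, HasDerivAt g (G t) t)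
    (hG : ∀ᶠ t in 𝓝 t₀, HasDerivAt G (-2 * r t * G t) t)
    (hr : ∀ᶠ t in 𝓝 t₀, HasDerivAt r (-q t - r t ^ 2) t) :
    iteratedDeriv 3 g =ᶠ[𝓝 t₀] fun t ↦ (6 * r t ^ 2 + 2 * q t) * G t := by
  have h₂ : iteratedDeriv 2 g =ᶠ[𝓝 t₀] fun t ↦ -2 * r t * G t := by
    rw [iteratedDeriv_succ, iteratedDeriv_one]
    have hderiv : deriv g =ᶠ[𝓝 t₀] G := hg.mono fun t ht ↦ ht.deriv
    exact hderiv.deriv.trans (hG.mono fun t ht ↦ ht.deriv)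
  refine iteratedDeriv_succ_eventuallyEq_mul h₂ hG (hr.mono fun t hr ↦ ?_)
  refine (hr.const_mul (-2)).congr_deriv ?_
  ring

lemma iteratedDeriv_four_eventuallyEq (hg : ∀ᶠ t in 𝓝 t₀, HasDerivAt g (G t) t)
    (hG : ∀ᶠ t in 𝓝 t₀, HasDerivAt G (-2 * r t * G t) t)
    (hr : ∀ᶠ t in 𝓝 t₀, HasDerivAt r (-q t - r t ^ 2) t)
    (hq : ∀ᶠ t in 𝓝 t₀, HasDerivAt q (q₁ t) t) :
    iteratedDeriv 4 g =ᶠ[𝓝 t₀]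
      fun t ↦ (-24 * r t ^ 3 - 16 * (r t * q t) + 2 * q₁ t) * G t := by
  refine iteratedDeriv_succ_eventuallyEq_mul (iteratedDeriv_three_eventuallyEq hg hG hr) hG ?_
  filter_upwards [hr, hq] with t hr hq
  refine (((hr.fun_pow 2).const_mul 6).add (hq.const_mul 2)).congr_deriv ?_
  push_cast
  ring

lemma iteratedDeriv_five_eventuallyEq (hg : ∀ᶠ t in 𝓝 t₀, HasDerivAt g (G t) t)
    (hG : ∀ᶠ t in 𝓝 t₀, HasDerivAt G (-2 * r t * G t) t)
    (hr : ∀ᶠ t in 𝓝 t₀, HasDerivAt r (-q t - r t ^ 2) t)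
    (hq : ∀ᶠ t in 𝓝 t₀, HasDerivAt q (q₁ t) t) (hq₁ : ∀ᶠ t in 𝓝 t₀, HasDerivAt q₁ (q₂ t) t) :
    iteratedDeriv 5 g =ᶠ[𝓝 t₀] fun t ↦
      (120 * r t ^ 4 + 120 * r t ^ 2 * q t + 16 * q t ^ 2 - 20 * r t * q₁ t + 2 * q₂ t) * G t := by
  refine iteratedDeriv_succ_eventuallyEq_mul (iteratedDeriv_four_eventuallyEq hg hG hr hq) hG ?_
  filter_upwards [hr, hq, hq₁] with t hr hq hq₁
  refine ((((hr.fun_pow 3).const_mul (-24)).sub ((hr.fun_mul hq).const_mul 16)).add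
    (hq₁.const_mul 2)).congr_deriv ?_
  push_cast
  ring

-- Here `r = -g''/(2g')` and `q` is half the Schwarzian derivative of `g`; the Möbius invariance of
-- the latter is the reason why `r` does not appear in the determinant.
lemma det_hankel_three_iteratedDeriv (hg : ∀ᶠ t in 𝓝 t₀, HasDerivAt g (G t) t)
    (hG : ∀ᶠ t in 𝓝 t₀, HasDerivAt G (-2 * r t * G t) t)
    (hr : ∀ᶠ t in 𝓝 t₀, HasDerivAt r (-q t - r t ^ 2) t)
    (hq : ∀ᶠ t in 𝓝 t₀, HasDerivAt q (q₁ t) t) (hq₁ : ∀ᶠ t in 𝓝 t₀, HasDerivAt q₁ (q₂ t) t) :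
    (hankel (fun m ↦ iteratedDeriv m g t₀ / m.factorial) 3).det =
      G t₀ ^ 3 * (q t₀ ^ 3 / 135 - q₁ t₀ ^ 2 / 144 + q t₀ * q₂ t₀ / 180) := by
  have h₁ : iteratedDeriv 1 g t₀ = G t₀ := by rw [iteratedDeriv_one, hg.self_of_nhds.deriv]
  have h₂ : iteratedDeriv 2 g t₀ = -2 * r t₀ * G t₀ := by
    rw [iteratedDeriv_succ, iteratedDeriv_one, ← hG.self_of_nhds.deriv]
    exact Filter.EventuallyEq.deriv_eq (hg.mono fun t ht ↦ ht.deriv)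
  have h₃ := (iteratedDeriv_three_eventuallyEq hg hG hr).self_of_nhds
  have h₄ := (iteratedDeriv_four_eventuallyEq hg hG hr hq).self_of_nhds
  have h₅ := (iteratedDeriv_five_eventuallyEq hg hG hr hq hq₁).self_of_nhds
  rw [det_hankel_three, h₁, h₂, h₃, h₄, h₅]
  simp only [Nat.factorial]
  push_cast
  ring

end Schwarzian

section Reparametrization

variable {θ u u₁ u₂ σ γ : ℝ → ℝ} {R x κ t : ℝ}

lemma IsSolution.hasDerivAt_logDeriv (hu : IsSolution θ u) (ht : u t ≠ 0) :
    HasDerivAt (fun s ↦ deriv u s / u s) (-θ t - (deriv u t / u t) ^ 2) t := by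
  refine ((hu.hasDerivAt_deriv t).div (hu.hasDerivAt t) ht).congr_deriv ?_
  field_simp

lemma IsFundPair.hasDerivAt_div (hu : IsFundPair θ x u₁ u₂) (ht : u₁ t ≠ 0) :
    HasDerivAt (fun s ↦ u₂ s / u₁ s) (u₁ t ^ 2)⁻¹ t := by
  obtain ⟨hu₁, hu₂, hu₁x, hu₁x', hu₂x, hu₂x'⟩ := hu
  have hW : u₁ t * deriv u₂ t - deriv u₁ t * u₂ t = 1 := by
    rw [← wronskian, hu₁.wronskian_eq hu₂ t x, wronskian, hu₁x, hu₁x', hu₂x, hu₂x']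
    ring
  refine ((hu₂.hasDerivAt t).div (hu₁.hasDerivAt t) ht).congr_deriv ?_
  rw [← one_div, ← hW]
  ring

lemma hasDerivAt_comp_mul_pow {f : ℝ → ℝ} {f' : ℝ} (hσ : HasDerivAt σ (γ t) t)
    (hγ : HasDerivAt γ (κ * γ t ^ 2) t) (hf : HasDerivAt f f' (σ t)) (n : ℕ) :
    HasDerivAt (fun s ↦ f (σ s) * γ s ^ n) ((f' + n * κ * f (σ t)) * γ t ^ (n + 1)) t := by
  refine ((hf.comp t hσ).mul (hγ.fun_pow n)).congr_deriv ?_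
  cases n with
  | zero => simp
  | succ n =>
    rw [Function.comp_apply, Nat.add_sub_cancel]
    ring

lemma IsSolution.hasDerivAt_inv_sq_comp_mul (hu : IsSolution θ u) (ht : u (σ t) ≠ 0)
    (hσ : HasDerivAt σ (γ t) t) (hγ : HasDerivAt γ (κ * γ t ^ 2) t) :
    HasDerivAt (fun s ↦ (u (σ s) ^ 2)⁻¹ * γ s)
      (-2 * ((deriv u (σ t) / u (σ t) - κ / 2) * γ t) * ((u (σ t) ^ 2)⁻¹ * γ t)) t := by
  refine ((((hu.hasDerivAt _).fun_pow 2).fun_inv (pow_ne_zero 2 ht)).comp t hσ |>.mul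
    hγ).congr_deriv ?_
  rw [Function.comp_apply]
  field_simp
  ring

lemma IsSolution.hasDerivAt_logDeriv_comp_mul (hu : IsSolution θ u) (ht : u (σ t) ≠ 0)
    (hσ : HasDerivAt σ (γ t) t) (hγ : HasDerivAt γ (κ * γ t ^ 2) t) :
    HasDerivAt (fun s ↦ (deriv u (σ s) / u (σ s) - κ / 2) * γ s)
      (-((θ (σ t) + κ ^ 2 / 4) * γ t ^ 2) - ((deriv u (σ t) / u (σ t) - κ / 2) * γ t) ^ 2) t := by
  refine (((hu.hasDerivAt_logDeriv ht).sub_const (κ / 2)).comp t hσ |>.mul hγ).congr_deriv ?_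
  rw [Function.comp_apply]
  ring

-- The Liouville transform: after the substitution `σ`, the equation `u'' + θ u = 0` becomes
-- `v'' + q v = 0` with `v = γ ^ (-1/2) (u ∘ σ)` and `q = γ ^ 2 (θ ∘ σ + κ ^ 2 / 4)`.
lemma IsFundPair.det_hankel_three_comp {t₀ : ℝ} (hu : IsFundPair θ (σ t₀) u₁ u₂)
    (hθ : ContDiff ℝ 2 θ) (hσ : ∀ᶠ t in 𝓝 t₀, HasDerivAt σ (γ t) t)
    (hγ : ∀ᶠ t in 𝓝 t₀, HasDerivAt γ (κ * γ t ^ 2) t) :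
    (hankel (fun m ↦ iteratedDeriv m (fun t ↦ u₂ (σ t) / u₁ (σ t)) t₀ / m.factorial) 3).det =
      γ t₀ ^ 9 * (θ (σ t₀) ^ 3 / 135 - deriv θ (σ t₀) ^ 2 / 144 +
        θ (σ t₀) * deriv (deriv θ) (σ t₀) / 180 +
        (deriv (deriv θ) (σ t₀) + 8 * θ (σ t₀) ^ 2) * κ ^ 2 / 720 +
        θ (σ t₀) * κ ^ 4 / 240 + κ ^ 6 / 2160) := by
  have hθ₀ (s : ℝ) : HasDerivAt (fun s ↦ θ s + κ ^ 2 / 4) (deriv θ s) s :=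
    (hθ.differentiable two_ne_zero s).hasDerivAt.add_const _
  have hθ₁ (s : ℝ) : HasDerivAt (deriv θ) (deriv (deriv θ) s) s :=
    ((ContDiff.iterate_deriv' 1 1 hθ).differentiable one_ne_zero s).hasDerivAt
  have hu₁ : ContinuousAt (fun t ↦ u₁ (σ t)) t₀ :=
    (hu.1.hasDerivAt _).continuousAt.comp hσ.self_of_nhds.continuousAt
  have hne : ∀ᶠ t in 𝓝 t₀, u₁ (σ t) ≠ 0 :=
    hu₁.eventually_ne (by rw [hu.2.2.1]; exact one_ne_zero)
  have hg : ∀ᶠ t in 𝓝 t₀,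
      HasDerivAt (fun t ↦ u₂ (σ t) / u₁ (σ t)) ((u₁ (σ t) ^ 2)⁻¹ * γ t) t := by
    filter_upwards [hσ, hne] with t hσ hne using (hu.hasDerivAt_div hne).comp t hσ
  rw [det_hankel_three_iteratedDeriv hg
    (r := fun t ↦ (deriv u₁ (σ t) / u₁ (σ t) - κ / 2) * γ t)
    (q := fun t ↦ (θ (σ t) + κ ^ 2 / 4) * γ t ^ 2)
    (by filter_upwards [hσ, hγ, hne] with t hσ hγ hne using
      hu.1.hasDerivAt_inv_sq_comp_mul hne hσ hγ)
    (by filter_upwards [hσ, hγ, hne] with t hσ hγ hne using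
      hu.1.hasDerivAt_logDeriv_comp_mul hne hσ hγ)
    (by filter_upwards [hσ, hγ] with t hσ hγ using hasDerivAt_comp_mul_pow hσ hγ (hθ₀ _) 2)
    (by filter_upwards [hσ, hγ] with t hσ hγ using
      hasDerivAt_comp_mul_pow hσ hγ ((hθ₁ _).fun_add ((hθ₀ _).const_mul _)) 3), hu.2.2.1]
  push_cast
  ring

lemma hasDerivAt_inv_one_sub_mul {κ t : ℝ} (ht : 1 - κ * t ≠ 0) :
    HasDerivAt (fun t ↦ (1 - κ * t)⁻¹) (κ * (1 - κ * t)⁻¹ ^ 2) t := by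
  refine ((hasDerivAt_one_sub_mul κ t).fun_inv ht).congr_deriv ?_
  rw [neg_neg, inv_pow, div_eq_mul_inv]

lemma IsFundPair.detR_three (hu : IsFundPair θ x u₁ u₂) (hθ : ContDiff ℝ 2 θ)
    (hR : R ≠ 0) :
    DetR R x u₁ u₂ 3 =
      θ x ^ 3 / 135 - (deriv θ x) ^ 2 / 144 + θ x * deriv (deriv θ) x / 180 +
        (deriv (deriv θ) x + 8 * θ x ^ 2) * π ^ 2 / (720 * R ^ 2) +
        θ x * π ^ 4 / (240 * R ^ 4) + π ^ 6 / (2160 * R ^ 6) := by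
  have hσx : x + gR R 0 = x := by rw [gR_zero, add_zero]
  have hpos := eventually_one_sub_mul_pos (π / R)
  have hdet : DetR R x u₁ u₂ 3 = _ := IsFundPair.det_hankel_three_comp (by rwa [hσx]) hθ
    (hpos.mono fun t ht ↦ (hasDerivAt_gR hR ht.ne').const_add x)
    (hpos.mono fun t ht ↦ hasDerivAt_inv_one_sub_mul ht.ne')
  rw [hdet, hσx, mul_zero, sub_zero, inv_one]
  field_simp

end Reparametrization

end Evaluation

end

/-- If θ is smooth, `0 < R`, and Hypothesis (H_R) holds, then for all `x`:
`θ³/135 - (θ')²/144 + θθ''/180 + (θ'' + 8θ²)π²/(720R²) + θπ⁴/(240R⁴) + π⁶/(2160R⁶) ≥ 0`. -/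
theorem stmt7 (θ : ℝ → ℝ) (hθ : ContDiff ℝ (⊤ : ℕ∞) θ) (R : ℝ) (hR : 0 < R)
    (hHyp : HypR θ R) :
    ∀ x : ℝ,
      0 ≤ θ x ^ 3 / 135 - (deriv θ x) ^ 2 / 144 + θ x * deriv (deriv θ) x / 180 +
        (deriv (deriv θ) x + 8 * θ x ^ 2) * Real.pi ^ 2 / (720 * R ^ 2) +
        θ x * Real.pi ^ 4 / (240 * R ^ 4) + Real.pi ^ 6 / (2160 * R ^ 6) := by
  intro x
  obtain ⟨f₁, f₂, -, hf₁, hf₂, hW, -⟩ := id hHyp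
  obtain ⟨u₁, u₂, hu⟩ := hf₁.exists_isFundPair hf₂ (x := x)
    (by rwa [hf₁.wronskian_eq hf₂ x 0, wronskian])
  rw [← hu.detR_three (mod_cast contDiff_infty.1 hθ 2) hR.ne']
  exact hHyp.detR_nonneg hR hu 3

end
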